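/- arXiv:2009.12755 — 2 statements merged into one kernel-verified Lean document; each statement's English description precedes it below -/
import Mathlib

section
/- (Derivative of the expected Huber loss for a density.) Let σ > 0 and let p : ℝ → [0,∞) be a probability density (∫_ℝ p = 1) with finite first moment ∫_ℝ |u| p(u) du < ∞. Then the function F(ν) = ∫_ℝ ℓ_σ(u − ν) p(u) du is differentiable at every ν ∈ ℝ with F′(ν) = −2 ∫_ℝ (u − ν) p(u) du + 2 ∫_{ν+σ}^{∞} (u − ν − σ) p(u) du + 2 ∫_{−∞}^{ν−σ} (u − ν + σ) p(u) du. -/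
open MeasureTheory

/-- The Huber loss with scale `σ`. -/
noncomputable def huberLoss (σ t : ℝ) : ℝ :=
  if |t| ≤ σ then t ^ 2 else 2 * σ * |t| - σ ^ 2

lemma measurable_huberLoss (σ : ℝ) : Measurable (huberLoss σ) := by
  unfold huberLoss
  exact Measurable.ite (measurableSet_le (by fun_prop) (by fun_prop)) (by fun_prop) (by fun_prop)

lemma abs_huberLoss_le {σ : ℝ} (hσ : 0 < σ) (x : ℝ) : |huberLoss σ x| ≤ 2 * σ * |x| := by
  have hx := abs_nonneg x
  unfold huberLoss
  split_ifs with h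
  · rw [abs_of_nonneg (sq_nonneg x), ← sq_abs x]
    nlinarith
  · rw [abs_of_nonneg] <;> nlinarith

/-- The derivative `2 * max (-σ) (min x σ)` of the Huber loss, in the form `2 x` minus the
excess of `x` beyond `[-σ, σ]`. -/
noncomputable def huberScore (σ x : ℝ) : ℝ :=
  2 * x - 2 * (if σ < x then x - σ else 0) - 2 * (if x < -σ then x + σ else 0)

/-- The first-order Taylor remainder of the Huber loss is at most quadratic. -/
lemma abs_huberLoss_sub_sub_le {σ : ℝ} (hσ : 0 < σ) (x y : ℝ) :
    |huberLoss σ y - huberLoss σ x - huberScore σ x * (y - x)| ≤ (y - x) ^ 2 := by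
  have eq (z : ℝ) : huberLoss σ z = if z < -σ then -2 * σ * z - σ ^ 2 else
      if σ < z then 2 * σ * z - σ ^ 2 else z ^ 2 := by
    unfold huberLoss
    simp only [abs_le]
    split_ifs with h₁ h₂ h₃ h₂ h₃
    · linarith
    · linarith
    · rfl
    · rw [abs_of_neg (by linarith)]; ring
    · rw [abs_of_pos (by linarith)]
    · exact absurd ⟨not_lt.1 h₂, not_lt.1 h₃⟩ h₁
  rw [eq, eq, huberScore, abs_le]
  split_ifs <;> constructor <;> first | linarith | nlinarith

/-- A function with an at most quadratic first-order remainder at `x` is differentiable there. -/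
lemma hasDerivAt_of_abs_sub_le_sq {f : ℝ → ℝ} {f' x C : ℝ}
    (h : ∀ y, |f y - f x - f' * (y - x)| ≤ C * (y - x) ^ 2) : HasDerivAt f f' x := by
  rw [hasDerivAt_iff_isLittleO]
  refine (Asymptotics.IsBigO.of_bound C (.of_forall fun y => ?_)).trans_isLittleO
    (Asymptotics.isLittleO_pow_sub_sub x one_lt_two)
  simpa [mul_comm] using h y

/-- Derivative of the expected Huber loss for a density `p` with finite first moment:
`F(ν) = ∫ ℓ_σ(u − ν) p(u) du` is differentiable with
`F′(ν) = −2∫(u−ν)p(u)du + 2∫_{ν+σ}^∞ (u−ν−σ)p(u)du + 2∫_{−∞}^{ν−σ} (u−ν+σ)p(u)du`. -/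
theorem hasDerivAt_expected_huber_loss
    (σ : ℝ) (hσ : 0 < σ)
    (p : ℝ → ℝ) (hp_meas : Measurable p) (hp_nonneg : ∀ u, 0 ≤ p u)
    (hp_int : Integrable p) (hp_prob : (∫ u, p u) = 1)
    (hp_mom : Integrable (fun u => |u| * p u)) (ν : ℝ) :
    HasDerivAt (fun t : ℝ => ∫ u, huberLoss σ (u - t) * p u)
      (-2 * (∫ u, (u - ν) * p u)
        + 2 * (∫ u in Set.Ioi (ν + σ), (u - ν - σ) * p u)
        + 2 * (∫ u in Set.Iio (ν - σ), (u - ν + σ) * p u)) ν := by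
  have int_abs (a : ℝ) : Integrable (fun u => |u - a| * p u) := by
    refine (hp_mom.add (hp_int.const_mul |a|)).mono' (by fun_prop) (.of_forall fun u => ?_)
    rw [Real.norm_eq_abs, abs_mul, abs_abs, abs_of_nonneg (hp_nonneg u)]
    simpa [add_mul] using mul_le_mul_of_nonneg_right (abs_sub u a) (hp_nonneg u)
  have int_lin (a : ℝ) : Integrable (fun u => (u - a) * p u) :=
    (int_abs a).mono (by fun_prop) (.of_forall fun u => by simp)
  have int_loss (t : ℝ) : Integrable (fun u => huberLoss σ (u - t) * p u) := by
    have hm := measurable_huberLoss σ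
    refine ((int_abs t).const_mul (2 * σ)).mono' (by fun_prop) (.of_forall fun u => ?_)
    rw [Real.norm_eq_abs, abs_mul, abs_of_nonneg (hp_nonneg u), ← mul_assoc]
    exact mul_le_mul_of_nonneg_right (abs_huberLoss_le hσ _) (hp_nonneg u)
  have int_right : Integrable ((Set.Ioi (ν + σ)).indicator fun u => (u - ν - σ) * p u) := by
    simpa only [sub_sub] using (int_lin (ν + σ)).indicator measurableSet_Ioi
  have int_left : Integrable ((Set.Iio (ν - σ)).indicator fun u => (u - ν + σ) * p u) := by
    simpa only [sub_add] using (int_lin (ν - σ)).indicator measurableSet_Iio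
  have score_eq (u : ℝ) : -(huberScore σ (u - ν) * p u) = -2 * ((u - ν) * p u)
      + 2 * (Set.Ioi (ν + σ)).indicator (fun u => (u - ν - σ) * p u) u
      + 2 * (Set.Iio (ν - σ)).indicator (fun u => (u - ν + σ) * p u) u := by
    have hr : σ < u - ν ↔ ν + σ < u := lt_sub_iff_add_lt'
    have hl : u - ν < -σ ↔ u < ν - σ := by constructor <;> intro h <;> linarith
    simp only [huberScore, Set.indicator_apply, Set.mem_Ioi, Set.mem_Iio, hr, hl]
    split_ifs <;> ring
  have int_score : Integrable (fun u => -(huberScore σ (u - ν) * p u)) := by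
    simp only [score_eq]
    exact (((int_lin ν).const_mul _).add (int_right.const_mul _)).add (int_left.const_mul _)
  have integral_score : ∫ u, -(huberScore σ (u - ν) * p u) = -2 * (∫ u, (u - ν) * p u)
        + 2 * (∫ u in Set.Ioi (ν + σ), (u - ν - σ) * p u)
        + 2 * (∫ u in Set.Iio (ν - σ), (u - ν + σ) * p u) := by
    simp only [score_eq]
    rw [integral_add (((int_lin ν).const_mul _).fun_add (int_right.const_mul _))
      (int_left.const_mul _), integral_add ((int_lin ν).const_mul _) (int_right.const_mul _),
      integral_const_mul, integral_const_mul, integral_const_mul,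
      integral_indicator measurableSet_Ioi, integral_indicator measurableSet_Iio]
  rw [← integral_score]
  refine hasDerivAt_of_abs_sub_le_sq (C := 1) fun t => ?_
  have int_diff : Integrable (fun u => huberLoss σ (u - t) * p u - huberLoss σ (u - ν) * p u) :=
    (int_loss t).sub (int_loss ν)
  rw [← integral_sub (int_loss t) (int_loss ν), ← integral_mul_const,
    ← integral_sub int_diff (int_score.mul_const _), ← hp_prob,
    ← integral_mul_const, ← Real.norm_eq_abs]
  refine norm_integral_le_of_norm_le (hp_int.mul_const _) (.of_forall fun u => ?_)
  calc ‖huberLoss σ (u - t) * p u - huberLoss σ (u - ν) * p u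
        - -(huberScore σ (u - ν) * p u) * (t - ν)‖
      = p u * |huberLoss σ (u - t) - huberLoss σ (u - ν)
          - huberScore σ (u - ν) * ((u - t) - (u - ν))| := by
        rw [← abs_of_nonneg (hp_nonneg u), Real.norm_eq_abs, ← abs_mul,
          abs_of_nonneg (hp_nonneg u)]
        ring_nf
    _ ≤ p u * ((u - t) - (u - ν)) ^ 2 :=
        mul_le_mul_of_nonneg_left (abs_huberLoss_sub_sub_le hσ _ _) (hp_nonneg u)
    _ = p u * (t - ν) ^ 2 := by ring
end

section
/- (Excess-risk lower bound via Lipschitzness.) Let ρ be a Borel probability measure on X × ℝ, σ > 0, and let f, g : X → ℝ be measurable functions with finite generalization errors. Then ‖f − g‖_{2,ρ} ≥ (1/(2σ)) |R^σ(f) − R^σ(g)|. Consequently, if f_σ is a minimizer of R^σ over all measurable functions with R^σ(f_σ) ≠ R^σ(f⋆), and f : X → ℝ is measurable with |R^σ(f) − R^σ(f_σ)| ≤ (1/2)|R^σ(f_σ) − R^σ(f⋆)|, then ‖f − f⋆‖_{2,ρ} ≥ (1/(4σ)) |R^σ(f_σ) − R^σ(f⋆)|. -/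
open MeasureTheory

/-- The Huber loss is `2σ`-Lipschitz; one-sided form. -/
theorem huberLoss_sub_le {σ : ℝ} (hσ : 0 < σ) (s t : ℝ) :
    huberLoss σ s - huberLoss σ t ≤ 2 * σ * |s - t| := by
  have h : 2 * σ * (|s| - |t|) ≤ 2 * σ * |s - t| := by
    gcongr
    exact abs_sub_abs_le_abs_sub s t
  have h' : 0 ≤ 2 * σ * |s - t| := by positivity
  have hs := abs_nonneg s
  have ht := abs_nonneg t
  unfold huberLoss
  rw [← sq_abs s, ← sq_abs t]
  split_ifs with h₁ h₂ h₂
  · rcases le_total |s| |t| with hst | hst <;> nlinarith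
  · nlinarith
  · nlinarith [sq_nonneg (|t| - σ)]
  · linarith

theorem abs_huberLoss_sub_le {σ : ℝ} (hσ : 0 < σ) (s t : ℝ) :
    |huberLoss σ s - huberLoss σ t| ≤ 2 * σ * |s - t| :=
  abs_sub_le_iff.2 ⟨huberLoss_sub_le hσ s t, abs_sub_comm s t ▸ huberLoss_sub_le hσ t s⟩

/-- The difference of two Huber risks is controlled by the `L²` distance of the predictors. -/
theorem ofReal_abs_huberRisk_sub_le_eLpNorm {X : Type*} [MeasurableSpace X]
    (ρ : Measure (X × ℝ)) [IsProbabilityMeasure ρ] {σ : ℝ} (hσ : 0 < σ) {f g : X → ℝ}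
    (hf : Measurable f) (hg : Measurable g)
    (hfi : Integrable (fun p : X × ℝ => huberLoss σ (p.2 - f p.1)) ρ)
    (hgi : Integrable (fun p : X × ℝ => huberLoss σ (p.2 - g p.1)) ρ) :
    ENNReal.ofReal ((1 / (2 * σ)) *
        |(∫ p, huberLoss σ (p.2 - f p.1) ∂ρ) - ∫ p, huberLoss σ (p.2 - g p.1) ∂ρ|)
      ≤ eLpNorm (fun x => f x - g x) 2 ρ.fst := by
  have hfg : Measurable (fun x => f x - g x) := hf.sub hg
  have hc : 0 < 1 / (2 * σ) := by positivity
  calc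
    _ = ‖∫ p, (1 / (2 * σ)) *
          (huberLoss σ (p.2 - f p.1) - huberLoss σ (p.2 - g p.1)) ∂ρ‖ₑ := by
      rw [integral_const_mul, integral_sub hfi hgi, Real.enorm_eq_ofReal_abs, abs_mul,
        abs_of_pos hc]
    _ ≤ ∫⁻ p, ‖(1 / (2 * σ)) *
          (huberLoss σ (p.2 - f p.1) - huberLoss σ (p.2 - g p.1))‖ₑ ∂ρ :=
      enorm_integral_le_lintegral_enorm _
    _ ≤ ∫⁻ p, ‖f p.1 - g p.1‖ₑ ∂ρ := by
      refine lintegral_mono fun p => ?_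
      rw [Real.enorm_eq_ofReal_abs, Real.enorm_eq_ofReal_abs, abs_mul, abs_of_pos hc]
      refine ENNReal.ofReal_le_ofReal ?_
      have h := abs_huberLoss_sub_le hσ (p.2 - f p.1) (p.2 - g p.1)
      rw [sub_sub_sub_cancel_left, abs_sub_comm (g p.1)] at h
      rw [one_div_mul_eq_div, div_le_iff₀' (by positivity)]
      exact h
    _ = eLpNorm (fun x => f x - g x) 1 ρ.fst := by
      rw [eLpNorm_one_eq_lintegral_enorm, Measure.fst,
        lintegral_map hfg.enorm measurable_fst]
    _ ≤ eLpNorm (fun x => f x - g x) 2 ρ.fst :=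
      eLpNorm_le_eLpNorm_of_exponent_le one_le_two hfg.aestronglyMeasurable

/-- Excess-risk lower bound via Lipschitzness: for measurable `f, g` with finite
generalization errors, `‖f − g‖_{2,ρ} ≥ (1/(2σ)) |R^σ(f) − R^σ(g)|`; consequently, if
`f_σ` minimizes `R^σ` over measurable functions, `R^σ(f_σ) ≠ R^σ(f⋆)`, and
`|R^σ(f) − R^σ(f_σ)| ≤ (1/2)|R^σ(f_σ) − R^σ(f⋆)|`, then
`‖f − f⋆‖_{2,ρ} ≥ (1/(4σ)) |R^σ(f_σ) − R^σ(f⋆)|`. -/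
theorem excess_risk_lower_bound
    {X : Type*} [MeasurableSpace X] [MetricSpace X] [CompactSpace X] [BorelSpace X]
    (ρ : Measure (X × ℝ)) [IsProbabilityMeasure ρ]
    (σ : ℝ) (hσ : 0 < σ)
    (fstar : X → ℝ) (hfstar_meas : Measurable fstar)
    (M : ℝ) (hfstar_bdd : ∀ x, |fstar x| ≤ M)
    (hfstar_int : Integrable (fun p : X × ℝ => huberLoss σ (p.2 - fstar p.1)) ρ) :
    (∀ f g : X → ℝ, Measurable f → Measurable g →
      Integrable (fun p : X × ℝ => huberLoss σ (p.2 - f p.1)) ρ →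
      Integrable (fun p : X × ℝ => huberLoss σ (p.2 - g p.1)) ρ →
      ENNReal.ofReal ((1 / (2 * σ)) *
          |(∫ p, huberLoss σ (p.2 - f p.1) ∂ρ) - ∫ p, huberLoss σ (p.2 - g p.1) ∂ρ|)
        ≤ eLpNorm (fun x => f x - g x) 2 ρ.fst)
    ∧ (∀ fσ : X → ℝ, Measurable fσ →
        Integrable (fun p : X × ℝ => huberLoss σ (p.2 - fσ p.1)) ρ →
        (∀ g : X → ℝ, Measurable g →
          Integrable (fun p : X × ℝ => huberLoss σ (p.2 - g p.1)) ρ →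
          (∫ p, huberLoss σ (p.2 - fσ p.1) ∂ρ) ≤ ∫ p, huberLoss σ (p.2 - g p.1) ∂ρ) →
        (∫ p, huberLoss σ (p.2 - fσ p.1) ∂ρ) ≠ (∫ p, huberLoss σ (p.2 - fstar p.1) ∂ρ) →
        ∀ f : X → ℝ, Measurable f →
          Integrable (fun p : X × ℝ => huberLoss σ (p.2 - f p.1)) ρ →
          |(∫ p, huberLoss σ (p.2 - f p.1) ∂ρ) - ∫ p, huberLoss σ (p.2 - fσ p.1) ∂ρ|
            ≤ (1 / 2) *
              |(∫ p, huberLoss σ (p.2 - fσ p.1) ∂ρ) - ∫ p, huberLoss σ (p.2 - fstar p.1) ∂ρ| →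
          ENNReal.ofReal ((1 / (4 * σ)) *
              |(∫ p, huberLoss σ (p.2 - fσ p.1) ∂ρ) - ∫ p, huberLoss σ (p.2 - fstar p.1) ∂ρ|)
            ≤ eLpNorm (fun x => f x - fstar x) 2 ρ.fst) := by
  refine ⟨fun f g hf hg hfi hgi => ofReal_abs_huberRisk_sub_le_eLpNorm ρ hσ hf hg hfi hgi,
    fun fσ _ _ _ _ f hf hfi hclose => ?_⟩
  refine le_trans (ENNReal.ofReal_le_ofReal ?_)
    (ofReal_abs_huberRisk_sub_le_eLpNorm ρ hσ hf hfstar_meas hfi hfstar_int)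
  set a := ∫ p, huberLoss σ (p.2 - f p.1) ∂ρ
  set b := ∫ p, huberLoss σ (p.2 - fσ p.1) ∂ρ
  set c := ∫ p, huberLoss σ (p.2 - fstar p.1) ∂ρ
  have htri : |b - c| ≤ |a - b| + |a - c| := by
    rw [abs_sub_comm a b]
    exact abs_sub_le b a c
  calc
    1 / (4 * σ) * |b - c| = 1 / (2 * σ) * (1 / 2 * |b - c|) := by ring
    _ ≤ 1 / (2 * σ) * |a - c| := by
      gcongr
      linarith
end
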